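/- Let d ≥ 2 and let μ₀, μ₁ be symmetric probability measures on ℤ whose moment generating functions t ↦ Σ_{j∈ℤ} e^{tj} μ_i({j}) are finite for all t ∈ (−R, R), where R > 0. Let (Y_v), indexed by the non-root vertices of the rooted Cayley tree of order d, be independent random variables, each distributed according to μ₀ or according to μ₁. Then the almost-sure limit H of the spherical averages H_r exists, E[exp(tH)] < ∞ for every real t with |t| < (d+1)R, and for every A with 0 < A < (d+1)R there exists B = B(A) < ∞ such that P(|H| ≥ s) ≤ B e^{−As} for all real s ≥ 0. -/

import Mathlib

open MeasureTheory ProbabilityTheory Filter Finset Topology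

noncomputable section

/-- A non-root vertex of the rooted Cayley tree of order `d`: the first step from the
root is one of `d+1` children, every further step one of `d` children. -/
abbrev Vertex (d : ℕ) : Type := Fin (d + 1) × List (Fin d)

/-- depth of a non-root vertex -/
def vdepth {d : ℕ} (v : Vertex d) : ℕ := v.2.length + 1

/-- the sphere `W_r` of radius `r ≥ 1`: all vertices of depth `r` -/
def sphereW (d r : ℕ) : Finset (Vertex d) :=
  (Finset.univ : Finset (Fin (d + 1) × (Fin (r - 1) → Fin d))).image
    (fun x => (x.1, List.ofFn x.2))

/-- height at `v`: sum of the increments along the path from the root to `v`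
(the prefixes of length `0,…,|v.2|` of the step list of `v` enumerate that path). -/
def heightAt {d : ℕ} {Ω : Type*} (Y : Vertex d → Ω → ℝ) (v : Vertex d) (ω : Ω) : ℝ :=
  ∑ k ∈ Finset.range (v.2.length + 1), Y (v.1, v.2.take k) ω

/-- spherical average `H_r` of the heights at depth `r` -/
def sphAvg (d : ℕ) {Ω : Type*} (Y : Vertex d → Ω → ℝ) (r : ℕ) (ω : Ω) : ℝ :=
  (((d + 1) * d ^ (r - 1) : ℕ) : ℝ)⁻¹ * ∑ v ∈ sphereW d r, heightAt Y v ω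

/-! ### Exponential moments of symmetric laws -/

lemma cosh_mul_le {c : ℝ} (hc : |c| ≤ 1) (x : ℝ) :
    Real.cosh (c * x) ≤ 1 + c ^ 2 * (Real.cosh x - 1) := by
  have hsum : HasSum (fun n : ℕ => c ^ 2 * (x ^ (2 * n) / ((2 * n).factorial : ℝ)) +
      if n = 0 then 1 - c ^ 2 else 0) (c ^ 2 * Real.cosh x + (1 - c ^ 2)) :=
    ((Real.hasSum_cosh x).mul_left _).add (hasSum_ite_eq 0 (1 - c ^ 2))
  have hc2 : c ^ 2 ≤ 1 := (sq_le_one_iff_abs_le_one c).2 hc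
  have hle := hasSum_le (fun n => ?_) (Real.hasSum_cosh (c * x)) hsum
  · linarith
  rcases n with _ | n
  · simp
  · have hx : 0 ≤ x ^ (2 * (n + 1)) / ((2 * (n + 1)).factorial : ℝ) :=
      div_nonneg (by rw [pow_mul]; positivity) (by positivity)
    have hcn : c ^ (2 * (n + 1)) ≤ c ^ 2 := by
      rw [pow_mul, pow_succ]
      exact mul_le_of_le_one_left (sq_nonneg c) (pow_le_one₀ (sq_nonneg c) hc2)
    rw [mul_pow, mul_div_assoc]
    simpa using mul_le_mul_of_nonneg_right hcn hx

lemma integrable_exp_mul_intCast {μ : Measure ℤ} {t : ℝ}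
    (h : ∫⁻ j : ℤ, ENNReal.ofReal (Real.exp (t * j)) ∂μ ≠ ⊤) :
    Integrable (fun j : ℤ => Real.exp (t * j)) μ :=
  (lintegral_ofReal_ne_top_iff_integrable (by fun_prop)
    (ae_of_all _ fun _ => (Real.exp_pos _).le)).1 h

lemma integral_exp_neg_mul_of_symm {μ : Measure ℤ} (hsymm : ∀ j : ℤ, μ {-j} = μ {j}) (t : ℝ) :
    ∫ j : ℤ, Real.exp (-t * j) ∂μ = ∫ j : ℤ, Real.exp (t * j) ∂μ := by
  have hmap : μ.map Neg.neg = μ := by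
    refine Measure.ext_of_singleton fun j => ?_
    rw [Measure.map_apply measurable_neg (measurableSet_singleton j)]
    simpa using hsymm j
  conv_rhs => rw [← hmap]
  rw [integral_map measurable_neg.aemeasurable (by fun_prop)]
  simp

/-- A symmetric law with finite exponential moments is sub-Gaussian near the origin. -/
lemma exists_mgf_le_exp_sq_of_symm {μ : Measure ℤ} [IsProbabilityMeasure μ]
    (hsymm : ∀ j : ℤ, μ {-j} = μ {j}) {a : ℝ} (ha : 0 < a)
    (hint : ∀ t : ℝ, |t| ≤ a → Integrable (fun j : ℤ => Real.exp (t * j)) μ) :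
    ∃ K : ℝ, 0 ≤ K ∧ ∀ t : ℝ, |t| ≤ a → mgf (fun j : ℤ => (j : ℝ)) μ t ≤ Real.exp (K * t ^ 2) := by
  have hcosh : ∀ t : ℝ, |t| ≤ a → Integrable (fun j : ℤ => Real.cosh (t * j)) μ := by
    intro t ht
    have := ((hint t ht).add (hint (-t) (by rwa [abs_neg]))).div_const 2
    refine this.congr (ae_of_all _ fun j => ?_)
    simp [Real.cosh_eq]
  have hmgf : ∀ t : ℝ, |t| ≤ a →
      mgf (fun j : ℤ => (j : ℝ)) μ t = ∫ j : ℤ, Real.cosh (t * j) ∂μ := by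
    intro t ht
    have hneg := integral_exp_neg_mul_of_symm hsymm t
    have hadd := integral_add (hint t ht) (hint (-t) (by rwa [abs_neg]))
    simp_rw [Real.cosh_eq, integral_div, mgf, ← neg_mul]
    rw [hadd, hneg]
    ring
  have haa : |a| ≤ a := (abs_of_pos ha).le
  set M : ℝ := ∫ j : ℤ, (Real.cosh (a * j) - 1) ∂μ
  have hM : 0 ≤ M := integral_nonneg fun j => sub_nonneg.2 (Real.one_le_cosh _)
  refine ⟨M / a ^ 2, by positivity, fun t ht => ?_⟩
  have hIM : Integrable (fun j : ℤ => Real.cosh (a * j) - 1) μ :=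
    (hcosh a haa).sub (integrable_const 1)
  calc mgf (fun j : ℤ => (j : ℝ)) μ t = ∫ j : ℤ, Real.cosh (t * j) ∂μ := hmgf t ht
    _ ≤ ∫ j : ℤ, (1 + (t / a) ^ 2 * (Real.cosh (a * j) - 1)) ∂μ := by
      refine integral_mono (hcosh t ht) ((integrable_const 1).add (hIM.const_mul _)) fun j => ?_
      have h1 : |t / a| ≤ 1 := by
        rw [abs_div, abs_of_pos ha]
        exact (div_le_one ha).2 ht
      have h2 := cosh_mul_le h1 (a * j)
      rwa [← mul_assoc, div_mul_cancel₀ _ ha.ne'] at h2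
    _ = M / a ^ 2 * t ^ 2 + 1 := by
      rw [integral_add (integrable_const 1) (hIM.const_mul _), integral_const_mul]
      simp [M]
      ring
    _ ≤ Real.exp (M / a ^ 2 * t ^ 2) := Real.add_one_le_exp _

/-! ### Weighted sums and limits of random variables -/

section RandomVariables

variable {Ω : Type*} [MeasurableSpace Ω] {P : Measure Ω}

lemma integrable_exp_and_mgf_weighted_sum_le [IsProbabilityMeasure P] {ι : Type*}
    {X : ι → Ω → ℝ} (hindep : iIndepFun X P) (hmeas : ∀ i, Measurable (X i)) {a K : ℝ}
    (hint : ∀ i t, |t| ≤ a → Integrable (fun ω => Real.exp (t * X i ω)) P)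
    (hmgf : ∀ i t, |t| ≤ a → mgf (X i) P t ≤ Real.exp (K * t ^ 2))
    (s : Finset ι) (w : ι → ℝ) {t : ℝ} (hw : ∀ i ∈ s, |w i * t| ≤ a) :
    Integrable (fun ω => Real.exp (t * ∑ i ∈ s, w i * X i ω)) P ∧
      mgf (fun ω => ∑ i ∈ s, w i * X i ω) P t ≤
        Real.exp (K * t ^ 2 * ∑ i ∈ s, w i ^ 2) := by
  have hindep' : iIndepFun (fun i ω => w i * X i ω) P :=
    hindep.comp (fun i x => w i * x) fun i => measurable_const_mul _
  have hmeas' : ∀ i, Measurable fun ω => w i * X i ω := fun i => (hmeas i).const_mul _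
  have hsum : (fun ω => ∑ i ∈ s, w i * X i ω) = ∑ i ∈ s, fun ω => w i * X i ω := by
    ext ω
    simp
  constructor
  · have := hindep'.integrable_exp_mul_sum (t := t) (s := s) hmeas' fun i hi => by
      simpa only [mul_assoc, mul_left_comm] using hint i _ (hw i hi)
    simpa using this
  · rw [hsum, hindep'.mgf_sum hmeas' s, Finset.mul_sum, Real.exp_sum]
    refine Finset.prod_le_prod (fun i _ => mgf_nonneg) fun i hi => ?_
    rw [mgf_const_mul]
    exact (hmgf i _ (hw i hi)).trans_eq (by ring_nf)

lemma ae_summable_of_lintegral_le {D : ℕ → Ω → ℝ} (hmeas : ∀ k, Measurable (D k))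
    {b : ℕ → ℝ} (hb : Summable b) (hb0 : ∀ k, 0 ≤ b k)
    (hD : ∀ k, ∫⁻ ω, ENNReal.ofReal |D k ω| ∂P ≤ ENNReal.ofReal (b k)) :
    ∀ᵐ ω ∂P, Summable fun k => D k ω := by
  have hmeas' : ∀ k, Measurable fun ω => ENNReal.ofReal |D k ω| := fun k => by
    have := hmeas k
    fun_prop
  have hfin : ∫⁻ ω, ∑' k, ENNReal.ofReal |D k ω| ∂P ≠ ⊤ := by
    rw [lintegral_tsum fun k => (hmeas' k).aemeasurable]
    refine ne_top_of_le_ne_top ?_ (ENNReal.tsum_le_tsum hD)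
    rw [← ENNReal.ofReal_tsum_of_nonneg hb0 hb]
    exact ENNReal.ofReal_ne_top
  filter_upwards [ae_lt_top (Measurable.tsum hmeas') hfin] with ω hω
  refine Summable.of_abs ?_
  have := ENNReal.summable_toReal hω.ne
  simpa [ENNReal.toReal_ofReal] using this

lemma lintegral_abs_le_of_mgf_le {D : Ω → ℝ} {t M : ℝ} (ht : 0 < t)
    (hint : ∀ s, |s| ≤ t → Integrable (fun ω => Real.exp (s * D ω)) P)
    (hpos : mgf D P t ≤ M) (hneg : mgf D P (-t) ≤ M) :
    ∫⁻ ω, ENNReal.ofReal |D ω| ∂P ≤ ENNReal.ofReal (2 * M / t) := by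
  have hp := hint t (abs_of_pos ht).le
  have hn := hint (-t) (by rw [abs_neg, abs_of_pos ht])
  have hI := (hp.add hn).div_const t
  calc ∫⁻ ω, ENNReal.ofReal |D ω| ∂P
      ≤ ∫⁻ ω, ENNReal.ofReal ((Real.exp (t * D ω) + Real.exp (-t * D ω)) / t) ∂P := by
        refine lintegral_mono fun ω => ENNReal.ofReal_le_ofReal ?_
        rw [le_div_iff₀ ht]
        have h1 := Real.add_one_le_exp (t * D ω)
        have h2 := Real.add_one_le_exp (-t * D ω)
        have h3 := Real.exp_pos (t * D ω)
        have h4 := Real.exp_pos (-t * D ω)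
        rcases abs_cases (D ω) with h | h <;> rw [h.1] <;> nlinarith
    _ = ENNReal.ofReal (∫ ω, (Real.exp (t * D ω) + Real.exp (-t * D ω)) / t ∂P) :=
        (ofReal_integral_eq_lintegral_ofReal hI (ae_of_all _ fun ω =>
          div_nonneg (add_nonneg (Real.exp_pos _).le (Real.exp_pos _).le) ht.le)).symm
    _ ≤ ENNReal.ofReal (2 * M / t) := by
        refine ENNReal.ofReal_le_ofReal ?_
        rw [integral_div, integral_add hp hn]
        have : mgf D P t + mgf D P (-t) ≤ 2 * M := by linarith
        exact div_le_div_of_nonneg_right this ht.le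

lemma integrable_exp_of_tendsto {F : ℕ → Ω → ℝ} {H : Ω → ℝ} {t C : ℝ}
    (hlim : ∀ᵐ ω ∂P, Tendsto (fun n => F n ω) atTop (𝓝 (H ω)))
    (hint : ∀ n, Integrable (fun ω => Real.exp (t * F n ω)) P)
    (hC : ∀ n, mgf (F n) P t ≤ C) :
    Integrable (fun ω => Real.exp (t * H ω)) P := by
  have hlim' : ∀ᵐ ω ∂P, Tendsto (fun n => Real.exp (t * F n ω)) atTop
      (𝓝 (Real.exp (t * H ω))) := by
    filter_upwards [hlim] with ω hω
    exact (Real.continuous_exp.tendsto _).comp (hω.const_mul t)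
  have hmeas : AEStronglyMeasurable (fun ω => Real.exp (t * H ω)) P :=
    aestronglyMeasurable_of_tendsto_ae _ (fun n => (hint n).1) hlim'
  rw [← lintegral_ofReal_ne_top_iff_integrable hmeas (ae_of_all _ fun _ => (Real.exp_pos _).le)]
  refine ne_top_of_le_ne_top (ENNReal.ofReal_ne_top (r := C)) ?_
  calc ∫⁻ ω, ENNReal.ofReal (Real.exp (t * H ω)) ∂P
      = ∫⁻ ω, liminf (fun n => ENNReal.ofReal (Real.exp (t * F n ω))) atTop ∂P := by
        refine lintegral_congr_ae ?_
        filter_upwards [hlim'] with ω hω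
        exact (ENNReal.tendsto_ofReal hω).liminf_eq.symm
    _ ≤ liminf (fun n => ∫⁻ ω, ENNReal.ofReal (Real.exp (t * F n ω)) ∂P) atTop :=
        lintegral_liminf_le' fun n => (hint n).1.aemeasurable.ennreal_ofReal
    _ ≤ ENNReal.ofReal C := by
        refine liminf_le_of_frequently_le' (Frequently.of_forall fun n => ?_)
        rw [← ofReal_integral_eq_lintegral_ofReal (hint n)
          (ae_of_all _ fun _ => (Real.exp_pos _).le)]
        exact ENNReal.ofReal_le_ofReal (hC n)

lemma exists_exponential_tail_bound [IsFiniteMeasure P] {H : Ω → ℝ} {A : ℝ} (hA : 0 ≤ A)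
    (hpos : Integrable (fun ω => Real.exp (A * H ω)) P)
    (hneg : Integrable (fun ω => Real.exp (-A * H ω)) P) :
    ∃ B : ℝ, 0 ≤ B ∧ ∀ s : ℝ, 0 ≤ s →
      P {ω | s ≤ |H ω|} ≤ ENNReal.ofReal (B * Real.exp (-A * s)) := by
  refine ⟨mgf H P A + mgf H P (-A), add_nonneg mgf_nonneg mgf_nonneg, fun s _ => ?_⟩
  have hp := measure_ge_le_exp_mul_mgf s hA hpos
  have hn := measure_le_le_exp_mul_mgf (-s) (neg_nonpos.2 hA) hneg
  have hset : {ω | s ≤ |H ω|} = {ω | s ≤ H ω} ∪ {ω | H ω ≤ -s} := by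
    ext ω
    simp [le_abs, le_neg]
  have hu : P.real {ω | s ≤ |H ω|} ≤ P.real {ω | s ≤ H ω} + P.real {ω | H ω ≤ -s} := by
    rw [hset]
    exact measureReal_union_le _ _
  rw [← ofReal_measureReal]
  refine ENNReal.ofReal_le_ofReal (hu.trans ?_)
  rw [show - -A * -s = -A * s by ring] at hn
  linarith

end RandomVariables

/-! ### Spherical averages on the tree -/

lemma mem_sphereW {d k : ℕ} {v : Vertex d} : v ∈ sphereW d (k + 1) ↔ v.2.length = k := by
  obtain ⟨i, l⟩ := v
  simp only [sphereW, Nat.add_sub_cancel, Finset.mem_image, Finset.mem_univ, true_and,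
    Prod.exists, Prod.mk.injEq]
  constructor
  · rintro ⟨_, f, _, rfl⟩
    exact List.length_ofFn
  · rintro rfl
    exact ⟨i, l.get, rfl, List.ofFn_get l⟩

lemma card_sphereW (d k : ℕ) : #(sphereW d (k + 1)) = (d + 1) * d ^ k := by
  rw [sphereW, Finset.card_image_of_injective]
  · simp
  · rintro ⟨i, f⟩ ⟨j, g⟩ h
    simpa [List.ofFn_injective.eq_iff] using h

lemma sum_sphereW_succ {d : ℕ} (k : ℕ) (F : Vertex d → ℝ) :
    ∑ v ∈ sphereW d (k + 2), F v =
      ∑ u ∈ sphereW d (k + 1), ∑ i : Fin d, F (u.1, u.2 ++ [i]) := by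
  rw [← Finset.sum_product']
  symm
  refine Finset.sum_bij (fun p _ => (p.1.1, p.1.2 ++ [p.2])) ?_ ?_ ?_ ?_
  · rintro ⟨u, i⟩ h
    simp only [Finset.mem_product, mem_sphereW, Finset.mem_univ, and_true] at h
    simp [mem_sphereW, h]
  · rintro ⟨⟨a, l⟩, i⟩ _ ⟨⟨b, m⟩, j⟩ _ h
    simpa [and_assoc] using h
  · rintro ⟨a, l⟩ h
    rw [mem_sphereW] at h
    have hl : l ≠ [] := by
      rintro rfl
      simp at h
    refine ⟨((a, l.dropLast), l.getLast hl), ?_, ?_⟩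
    · simp only [Finset.mem_product, mem_sphereW, Finset.mem_univ, and_true]
      simp_all
    · simp [List.dropLast_append_getLast hl]
  · intros
    rfl

lemma sum_sphereW_take {d : ℕ} (k n : ℕ) (F : Vertex d → ℝ) :
    ∑ v ∈ sphereW d (k + n + 1), F (v.1, v.2.take k) =
      (d : ℝ) ^ n * ∑ u ∈ sphereW d (k + 1), F u := by
  induction n with
  | zero =>
    simp only [add_zero, pow_zero, one_mul]
    refine Finset.sum_congr rfl fun v hv => ?_
    rw [List.take_of_length_le (mem_sphereW.1 hv).le]
  | succ n ih =>
    rw [show k + (n + 1) + 1 = (k + n) + 2 by ring, sum_sphereW_succ, pow_succ', mul_assoc, ← ih,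
      Finset.mul_sum]
    refine Finset.sum_congr rfl fun u hu => ?_
    have hk : k ≤ u.2.length := by
      rw [mem_sphereW.1 hu]
      omega
    simp [List.take_append_of_le_length hk]

/-- The weight of a vertex: the inverse of the size of the sphere it lies on. -/
def sphereWeight {d : ℕ} (v : Vertex d) : ℝ := (((d + 1) * d ^ v.2.length : ℕ) : ℝ)⁻¹

lemma sphereWeight_eq {d k : ℕ} {v : Vertex d} (hv : v ∈ sphereW d (k + 1)) :
    sphereWeight v = (((d + 1) * d ^ k : ℕ) : ℝ)⁻¹ := by
  rw [sphereWeight, mem_sphereW.1 hv]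

lemma sphAvg_succ_eq_sum {d : ℕ} (hd : d ≠ 0) {Ω : Type*} (Y : Vertex d → Ω → ℝ) (r : ℕ) (ω : Ω) :
    sphAvg d Y (r + 1) ω =
      ∑ k ∈ Finset.range (r + 1), ∑ v ∈ sphereW d (k + 1), sphereWeight v * Y v ω := by
  have hheight : ∑ v ∈ sphereW d (r + 1), heightAt Y v ω =
      ∑ k ∈ Finset.range (r + 1), ∑ v ∈ sphereW d (r + 1), Y (v.1, v.2.take k) ω := by
    rw [Finset.sum_comm]
    refine Finset.sum_congr rfl fun v hv => ?_
    rw [heightAt, mem_sphereW.1 hv]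
  rw [sphAvg, hheight, Finset.mul_sum]
  refine Finset.sum_congr rfl fun k hk => ?_
  obtain ⟨n, rfl⟩ := Nat.exists_eq_add_of_le (Nat.lt_succ_iff.1 (Finset.mem_range.1 hk))
  rw [sum_sphereW_take k n fun v => Y v ω, ← mul_assoc, Finset.mul_sum]
  refine Finset.sum_congr rfl fun v hv => ?_
  rw [sphereWeight_eq hv]
  congr 1
  have hd' : (d : ℝ) ≠ 0 := Nat.cast_ne_zero.2 hd
  push_cast
  rw [pow_add]
  field_simp

/-- The closed ball of radius `r` around the root, without the root. -/
def ballW (d r : ℕ) : Finset (Vertex d) := (Finset.range r).biUnion fun k => sphereW d (k + 1)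

lemma sum_ballW {d : ℕ} (r : ℕ) (F : Vertex d → ℝ) :
    ∑ v ∈ ballW d r, F v = ∑ k ∈ Finset.range r, ∑ v ∈ sphereW d (k + 1), F v := by
  refine Finset.sum_biUnion fun k _ l _ hkl => ?_
  refine Finset.disjoint_left.2 fun v hk hl => hkl ?_
  rw [← mem_sphereW.1 hk, ← mem_sphereW.1 hl]

lemma sum_sphereWeight_sq {d : ℕ} (hd : d ≠ 0) (k : ℕ) :
    ∑ v ∈ sphereW d (k + 1), sphereWeight v ^ 2 = (((d + 1) * d ^ k : ℕ) : ℝ)⁻¹ := by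
  rw [Finset.sum_congr rfl fun v hv => by rw [sphereWeight_eq hv], Finset.sum_const, card_sphereW,
    nsmul_eq_mul]
  have : (((d + 1) * d ^ k : ℕ) : ℝ) ≠ 0 := by positivity
  field_simp

lemma two_pow_le_sphere_card {d : ℕ} (hd : 2 ≤ d) (k : ℕ) :
    (2 : ℝ) ^ k ≤ (((d + 1) * d ^ k : ℕ) : ℝ) := by
  have h : 2 ^ k ≤ (d + 1) * d ^ k :=
    (Nat.pow_le_pow_left hd k).trans (Nat.le_mul_of_pos_left _ d.succ_pos)
  exact_mod_cast h

lemma sum_ballW_sphereWeight_sq_le {d : ℕ} (hd : 2 ≤ d) (r : ℕ) :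
    ∑ v ∈ ballW d r, sphereWeight v ^ 2 ≤ 2 := by
  rw [sum_ballW]
  calc ∑ k ∈ Finset.range r, ∑ v ∈ sphereW d (k + 1), sphereWeight v ^ 2
      ≤ ∑ k ∈ Finset.range r, (1 / (2 : ℝ)) ^ k := by
        refine Finset.sum_le_sum fun k _ => ?_
        rw [sum_sphereWeight_sq (by omega), one_div, inv_pow]
        exact inv_anti₀ (by positivity) (two_pow_le_sphere_card hd k)
    _ ≤ ∑' k : ℕ, (1 / (2 : ℝ)) ^ k :=
        summable_geometric_two.sum_le_tsum _ fun _ _ => by positivity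
    _ = 2 := tsum_geometric_two

lemma abs_sphereWeight_mul_le {d : ℕ} (hd : d ≠ 0) (v : Vertex d) (t : ℝ) :
    |sphereWeight v * t| ≤ |t| / ((d : ℝ) + 1) := by
  have h1 : (d : ℝ) + 1 ≤ (((d + 1) * d ^ v.2.length : ℕ) : ℝ) := by
    have : d + 1 ≤ (d + 1) * d ^ v.2.length :=
      Nat.le_mul_of_pos_right _ (pow_pos (Nat.pos_of_ne_zero hd) _)
    exact_mod_cast this
  rw [sphereWeight, abs_mul, abs_of_nonneg (by positivity), mul_comm, ← div_eq_mul_inv]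
  exact div_le_div_of_nonneg_left (abs_nonneg t) (by positivity) h1

/-- Increments following one of two symmetric laws are uniformly sub-Gaussian near the origin. -/
lemma exists_uniform_mgf_le {Ω ι : Type*} [MeasurableSpace Ω] {P : Measure Ω}
    {μ₀ μ₁ : Measure ℤ} [IsProbabilityMeasure μ₀] [IsProbabilityMeasure μ₁]
    (hsymm₀ : ∀ j : ℤ, μ₀ {-j} = μ₀ {j}) (hsymm₁ : ∀ j : ℤ, μ₁ {-j} = μ₁ {j})
    {a : ℝ} (ha : 0 < a)
    (hint₀ : ∀ t : ℝ, |t| ≤ a → Integrable (fun j : ℤ => Real.exp (t * j)) μ₀)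
    (hint₁ : ∀ t : ℝ, |t| ≤ a → Integrable (fun j : ℤ => Real.exp (t * j)) μ₁)
    {Y : ι → Ω → ℤ} (hmeas : ∀ v, Measurable (Y v))
    (hlaw : ∀ v, Measure.map (Y v) P = μ₀ ∨ Measure.map (Y v) P = μ₁) :
    ∃ K : ℝ, 0 ≤ K ∧ ∀ v t, |t| ≤ a →
      Integrable (fun ω => Real.exp (t * (Y v ω : ℝ))) P ∧
        mgf (fun ω => (Y v ω : ℝ)) P t ≤ Real.exp (K * t ^ 2) := by
  obtain ⟨K₀, hK₀, hb₀⟩ := exists_mgf_le_exp_sq_of_symm hsymm₀ ha hint₀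
  obtain ⟨K₁, _, hb₁⟩ := exists_mgf_le_exp_sq_of_symm hsymm₁ ha hint₁
  refine ⟨max K₀ K₁, le_max_of_le_left hK₀, fun v t ht => ?_⟩
  have hmap : mgf (fun j : ℤ => (j : ℝ)) (P.map (Y v)) t = mgf (fun ω => (Y v ω : ℝ)) P t :=
    mgf_map (hmeas v).aemeasurable (by fun_prop)
  have hexp : ∀ {K : ℝ}, K ≤ max K₀ K₁ →
      Real.exp (K * t ^ 2) ≤ Real.exp (max K₀ K₁ * t ^ 2) := fun hK =>
    Real.exp_le_exp.2 (mul_le_mul_of_nonneg_right hK (sq_nonneg t))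
  have hcomp (h : Integrable (fun j : ℤ => Real.exp (t * j)) (P.map (Y v))) :
      Integrable (fun ω => Real.exp (t * (Y v ω : ℝ))) P := h.comp_measurable (hmeas v)
  rw [← hmap]
  rcases hlaw v with h | h
  · exact ⟨hcomp (h ▸ hint₀ t ht),
      h ▸ (hb₀ t ht).trans (hexp (le_max_left _ _))⟩
  · exact ⟨hcomp (h ▸ hint₁ t ht),
      h ▸ (hb₁ t ht).trans (hexp (le_max_right _ _))⟩

/-- The spherical averages of independent increments that are uniformly sub-Gaussian near the
origin converge almost surely. -/
lemma exists_ae_tendsto_sphAvg {Ω : Type*} [MeasurableSpace Ω] {P : Measure Ω}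
    [IsProbabilityMeasure P] {d : ℕ} (hd : 2 ≤ d) {X : Vertex d → Ω → ℝ}
    (hindep : iIndepFun X P) (hmeas : ∀ v, Measurable (X v)) {a K : ℝ} (ha : 0 < a)
    (hint : ∀ v t, |t| ≤ a → Integrable (fun ω => Real.exp (t * X v ω)) P)
    (hmgf : ∀ v t, |t| ≤ a → mgf (X v) P t ≤ Real.exp (K * t ^ 2)) :
    ∃ H : Ω → ℝ, ∀ᵐ ω ∂P, Tendsto (fun r => sphAvg d X r ω) atTop (𝓝 (H ω)) := by
  have hd0 : d ≠ 0 := by omega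
  set D : ℕ → Ω → ℝ := fun k ω => ∑ v ∈ sphereW d (k + 1), sphereWeight v * X v ω
  have hDmeas : ∀ k, Measurable (D k) := fun k =>
    Finset.measurable_fun_sum _ fun v _ => (hmeas v).const_mul _
  set M : ℝ := Real.exp (K * a ^ 2)
  have hbound : ∀ k, ∫⁻ ω, ENNReal.ofReal |D k ω| ∂P ≤
      ENNReal.ofReal (2 * M / a * (√2)⁻¹ ^ k) := by
    intro k
    set N : ℝ := (((d + 1) * d ^ k : ℕ) : ℝ) with hN
    have hN2 : (2 : ℝ) ^ k ≤ N := two_pow_le_sphere_card hd k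
    have hN1 : 1 ≤ N := (one_le_pow₀ one_le_two).trans hN2
    have hN0 : 0 < N := zero_lt_one.trans_le hN1
    have hsq : √N ^ 2 = N := Real.sq_sqrt hN0.le
    have hs1 : 1 ≤ √N := Real.one_le_sqrt.2 hN1
    have ht0 : 0 < a * √N := by positivity
    have hw : ∀ s, |s| ≤ a * √N → ∀ v ∈ sphereW d (k + 1), |sphereWeight v * s| ≤ a := by
      intro s hs v hv
      rw [sphereWeight_eq hv, abs_mul, abs_of_pos (inv_pos.2 hN0), inv_mul_le_iff₀ hN0]
      nlinarith
    have hmain := fun s hs => integrable_exp_and_mgf_weighted_sum_le hindep hmeas hint hmgf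
      (sphereW d (k + 1)) sphereWeight (hw s hs)
    have hexp : K * (a * √N) ^ 2 * ∑ v ∈ sphereW d (k + 1), sphereWeight v ^ 2 = K * a ^ 2 := by
      rw [sum_sphereWeight_sq hd0, mul_pow, hsq, ← hN]
      field_simp
    refine (lintegral_abs_le_of_mgf_le (M := M) ht0 (fun s hs => (hmain s hs).1) ?_ ?_).trans
      (ENNReal.ofReal_le_ofReal ?_)
    · exact (hmain _ (abs_of_pos ht0).le).2.trans_eq (by rw [hexp])
    · exact (hmain _ (by rw [abs_neg, abs_of_pos ht0])).2.trans_eq (by rw [neg_sq, hexp])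
    · have hpow : √2 ^ k ≤ √N := by
        refine Real.le_sqrt_of_sq_le ?_
        rwa [← pow_mul, mul_comm, pow_mul, Real.sq_sqrt zero_le_two]
      rw [inv_pow, ← div_eq_mul_inv, div_div]
      exact div_le_div_of_nonneg_left (by positivity) (by positivity)
        (mul_le_mul_of_nonneg_left hpow ha.le)
  have hgeom : Summable fun k : ℕ => 2 * M / a * (√2)⁻¹ ^ k :=
    (summable_geometric_of_lt_one (by positivity)
      (inv_lt_one_of_one_lt₀ Real.one_lt_sqrt_two)).mul_left _
  refine ⟨fun ω => ∑' k, D k ω, ?_⟩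
  filter_upwards [ae_summable_of_lintegral_le hDmeas hgeom (fun k => by positivity) hbound]
    with ω hω
  rw [← tendsto_add_atTop_iff_nat 1]
  simp_rw [sphAvg_succ_eq_sum hd0]
  exact (tendsto_add_atTop_iff_nat 1).2 hω.hasSum.tendsto_sum_nat

/-- Independent increments each distributed according to one of two
symmetric laws `μ₀, μ₁` on `ℤ` whose mgfs are finite on `(-R,R)`: the a.s. limit `H` of the
spherical averages exists, has finite exponential moments of order `|t| < (d+1)R`, and
satisfies the exponential tail bound `P(|H| ≥ s) ≤ B e^{-As}` for every `0 < A < (d+1)R`. -/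
theorem two_law_increments_exponential_tail
    {Ω : Type} [MeasurableSpace Ω] (P : Measure Ω) [IsProbabilityMeasure P]
    (d : ℕ) (hd : 2 ≤ d)
    (μ₀ μ₁ : Measure ℤ) [IsProbabilityMeasure μ₀] [IsProbabilityMeasure μ₁]
    (hsymm₀ : ∀ j : ℤ, μ₀ {-j} = μ₀ {j}) (hsymm₁ : ∀ j : ℤ, μ₁ {-j} = μ₁ {j})
    (R : ℝ) (hR : 0 < R)
    (hmgf₀ : ∀ t : ℝ, |t| < R → ∫⁻ j : ℤ, ENNReal.ofReal (Real.exp (t * j)) ∂μ₀ ≠ ⊤)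
    (hmgf₁ : ∀ t : ℝ, |t| < R → ∫⁻ j : ℤ, ENNReal.ofReal (Real.exp (t * j)) ∂μ₁ ≠ ⊤)
    (Y : Vertex d → Ω → ℤ) (hmeas : ∀ v, Measurable (Y v))
    (hindep : iIndepFun Y P)
    (hlaw : ∀ v, Measure.map (Y v) P = μ₀ ∨ Measure.map (Y v) P = μ₁) :
    ∃ H : Ω → ℝ,
      (∀ᵐ ω ∂P, Tendsto (fun r => sphAvg d (fun v ω => (Y v ω : ℝ)) r ω) atTop (𝓝 (H ω))) ∧
      (∀ t : ℝ, |t| < ((d : ℝ) + 1) * R → Integrable (fun ω => Real.exp (t * H ω)) P) ∧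
      (∀ A : ℝ, 0 < A → A < ((d : ℝ) + 1) * R →
        ∃ B : ℝ, 0 ≤ B ∧ ∀ s : ℝ, 0 ≤ s →
          P {ω | s ≤ |H ω|} ≤ ENNReal.ofReal (B * Real.exp (-A * s))) := by
  have hd0 : d ≠ 0 := by omega
  have hindep' : iIndepFun (fun v ω => (Y v ω : ℝ)) P :=
    hindep.comp (fun _ j => (j : ℝ)) fun _ => by fun_prop
  have hmeas' : ∀ v, Measurable fun ω => (Y v ω : ℝ) := fun v => by
    have := hmeas v
    fun_prop
  have huniform : ∀ a : ℝ, 0 < a → a < R → _ := fun a ha haR =>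
    exists_uniform_mgf_le hsymm₀ hsymm₁ ha
      (fun t ht => integrable_exp_mul_intCast (hmgf₀ t (ht.trans_lt haR)))
      (fun t ht => integrable_exp_mul_intCast (hmgf₁ t (ht.trans_lt haR))) hmeas hlaw
  obtain ⟨H, hH⟩ : ∃ H : Ω → ℝ, ∀ᵐ ω ∂P,
      Tendsto (fun r => sphAvg d (fun v ω => (Y v ω : ℝ)) r ω) atTop (𝓝 (H ω)) := by
    obtain ⟨K, _, hK⟩ := huniform (R / 2) (half_pos hR) (half_lt_self hR)
    exact exists_ae_tendsto_sphAvg hd hindep' hmeas' (half_pos hR)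
      (fun v t ht => (hK v t ht).1) fun v t ht => (hK v t ht).2
  have hexp : ∀ t : ℝ, |t| < ((d : ℝ) + 1) * R →
      Integrable (fun ω => Real.exp (t * H ω)) P := by
    intro t ht
    have hd1 : (0 : ℝ) < (d : ℝ) + 1 := by positivity
    obtain ⟨a, hta, haR⟩ := exists_between ((div_lt_iff₀' hd1).2 ht)
    have ha : 0 < a := lt_of_le_of_lt (by positivity) hta
    obtain ⟨K, hK0, hK⟩ := huniform a ha haR
    have hmain := fun r => integrable_exp_and_mgf_weighted_sum_le hindep' hmeas'
      (fun v t ht => (hK v t ht).1) (fun v t ht => (hK v t ht).2) (ballW d (r + 1)) sphereWeight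
      fun v _ => (abs_sphereWeight_mul_le hd0 v t).trans hta.le
    have hball : ∀ r, (fun ω => ∑ v ∈ ballW d (r + 1), sphereWeight v * (Y v ω : ℝ)) =
        sphAvg d (fun v ω => (Y v ω : ℝ)) (r + 1) := by
      intro r
      ext ω
      rw [sum_ballW, sphAvg_succ_eq_sum hd0]
    refine integrable_exp_of_tendsto (C := Real.exp (K * t ^ 2 * 2))
      (F := fun r => sphAvg d (fun v ω => (Y v ω : ℝ)) (r + 1)) ?_ (fun r => ?_) fun r => ?_
    · filter_upwards [hH] with ω hω
      exact (tendsto_add_atTop_iff_nat 1).2 hω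
    · rw [← hball]
      exact (hmain r).1
    · rw [← hball]
      refine (hmain r).2.trans (Real.exp_le_exp.2 ?_)
      exact mul_le_mul_of_nonneg_left (sum_ballW_sphereWeight_sq_le hd _) (by positivity)
  refine ⟨H, hH, hexp, fun A hA hAR => exists_exponential_tail_bound hA.le (hexp A ?_) (hexp _ ?_)⟩
  · rwa [abs_of_pos hA]
  · rwa [abs_neg, abs_of_pos hA]
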